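/- Let S' be a sign string of length n whose k-th entry is −, and let S be the sign string of length n+1 obtained from S' by replacing this entry by two consecutive entries +,+. If x ∈ V^{S'} has property P, then (id^{⊗(k−1)} ⊗ t^{++}_- ⊗ id^{⊗(n−k)})(x) ∈ V^S has property P. The same holds with the roles of + and − exchanged, using t^{--}_+ in place of t^{++}_-. -/

import Mathlib

/-!
Writing `c ↦ c₀` for the constant term on `ℤ[v⁻¹]`, property P says that `x` has coefficients in
`ℤ[v⁻¹]` and that `x₀` is supported on at most one basis vector. Taking constant terms is a ring
homomorphism, so a local map `V → V ⊗ V` whose values at the basis vectors have property P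
preserves property P: if `x₀` is supported on `Q ++ c :: R`, its image is supported on the
`Q ++ a :: b :: R` with `(a, b)` in the support of the image of `e_c`, and there is at most one such
`(a, b)`. For `t^{++}_-` and `t^{--}_+` these are the pairs `(a, b)` with `YPat a b c`.
-/

noncomputable section

/-- The ground field `K = ℚ(v)`. -/
abbrev K : Type := RatFunc ℚ

/-- The indeterminate `v`. -/
def v : K := RatFunc.X

/-- The three states `-1, 0, 1`. -/
inductive St where
  | neg : St
  | zero : St
  | pos : St
deriving DecidableEq

instance : Fintype St where
  elems := {St.neg, St.zero, St.pos}
  complete := fun x => by cases x <;> simp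

/-- The integer value of a state. -/
def stval : St → ℤ
  | .neg => -1
  | .zero => 0
  | .pos => 1

/-- The order `-1 < 0 < 1` on states. -/
def stLt (a b : St) : Prop := stval a < stval b

/-- The weight `μ(s, j) ∈ ℤ²`; `true` is the sign `+`, `false` is `-`. -/
def wt : Bool → St → ℤ × ℤ
  | true, .pos => (1, 0)
  | true, .zero => (-1, 1)
  | true, .neg => (0, -1)
  | false, .pos => (0, 1)
  | false, .zero => (1, -1)
  | false, .neg => (-1, 0)

/-- Total weight `Σ μ(s_k, j_k)` of a sign string and a state string. -/
def wtSum (S : List Bool) (J : List St) : ℤ × ℤ :=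
  ((S.zip J).map fun p => wt p.1 p.2).sum

/-- A state string is dominant if its lattice path stays in the dominant
Weyl chamber and returns to the origin. -/
def Dominant (S : List Bool) (J : List St) : Prop :=
  J.length = S.length ∧
  (∀ k : ℕ, 0 ≤ (wtSum (S.take k) (J.take k)).1 ∧ 0 ≤ (wtSum (S.take k) (J.take k)).2) ∧
  wtSum S J = 0

/-- Coefficients of `b^{+-}(1) ∈ V⁺ ⊗ V⁻`. -/
def bCpm : St → St → K
  | .pos, .neg => 1
  | .zero, .zero => v⁻¹
  | .neg, .pos => v⁻¹ ^ 2
  | _, _ => 0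

/-- Coefficients of `b^{-+}(1) ∈ V⁻ ⊗ V⁺`. -/
def bCmp : St → St → K
  | .pos, .neg => 1
  | .zero, .zero => v⁻¹
  | .neg, .pos => v⁻¹ ^ 2
  | _, _ => 0

/-- Matrix entries of `σ_{+-} : V⁺ ⊗ V⁻ → K`. -/
def sCpm : St → St → K
  | .neg, .pos => 1
  | .zero, .zero => v
  | .pos, .neg => v ^ 2
  | _, _ => 0

/-- Matrix entries of `σ_{-+} : V⁻ ⊗ V⁺ → K`. -/
def sCmp : St → St → K
  | .neg, .pos => 1
  | .zero, .zero => v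
  | .pos, .neg => v ^ 2
  | _, _ => 0

/-- `tYpp a b c` is the coefficient of `e_a ⊗ e_b` in `t^{++}_-(e_c)`. -/
def tYpp : St → St → St → K
  | .pos, .zero, .pos => 1
  | .zero, .pos, .pos => v⁻¹
  | .pos, .neg, .zero => 1
  | .neg, .pos, .zero => v⁻¹
  | .zero, .neg, .neg => 1
  | .neg, .zero, .neg => v⁻¹
  | _, _, _ => 0

/-- `tYmm a b c` is the coefficient of `e_a ⊗ e_b` in `t^{--}_+(e_c)`. -/
def tYmm : St → St → St → K
  | .pos, .zero, .pos => 1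
  | .zero, .pos, .pos => v⁻¹
  | .pos, .neg, .zero => 1
  | .neg, .pos, .zero => v⁻¹
  | .zero, .neg, .neg => 1
  | .neg, .zero, .neg => v⁻¹
  | _, _, _ => 0

/-- `tLpp a b c` is the coefficient of `e_c` in `t^-_{++}(e_a ⊗ e_b)`. -/
def tLpp : St → St → St → K
  | .pos, .zero, .pos => v
  | .zero, .pos, .pos => 1
  | .pos, .neg, .zero => v
  | .neg, .pos, .zero => 1
  | .zero, .neg, .neg => v
  | .neg, .zero, .neg => 1
  | _, _, _ => 0

/-- `tLmm a b c` is the coefficient of `e_c` in `t^+_{--}(e_a ⊗ e_b)`. -/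
def tLmm : St → St → St → K
  | .pos, .zero, .pos => v
  | .zero, .pos, .pos => 1
  | .pos, .neg, .zero => v
  | .neg, .pos, .zero => 1
  | .zero, .neg, .neg => v
  | .neg, .zero, .neg => 1
  | _, _, _ => 0

/-- Matrix entries of the H-map
`(id_{V⁺} ⊗ t^-_{++}) ∘ (t^{++}_- ⊗ id_{V⁺}) : V⁻ ⊗ V⁺ → V⁺ ⊗ V⁻`:
`HCpm a b c d` is the coefficient of `e_a ⊗ e_b` in the image of `e_c ⊗ e_d`. -/
def HCpm (a b c d : St) : K := ∑ y : St, tYpp a y c * tLpp y d b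

/-- Matrix entries of the H-map
`(t^-_{++} ⊗ id_{V⁺}) ∘ (id_{V⁺} ⊗ t^{++}_-) : V⁺ ⊗ V⁻ → V⁻ ⊗ V⁺`:
`HCmp a b c d` is the coefficient of `e_a ⊗ e_b` in the image of `e_c ⊗ e_d`. -/
def HCmp (a b c d : St) : K := ∑ x : St, tLpp c x a * tYpp x b d

/-- State patterns of the three H-rules: `(j_k, j_{k+1})` on top, the
replacement below. -/
inductive HPat : St → St → St → St → Prop where
  | h1 : HPat .pos .zero .zero .pos
  | h2 : HPat .zero .zero .neg .pos
  | h3 : HPat .zero .neg .neg .zero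

/-- State patterns of the three Y-rules. -/
inductive YPat : St → St → St → Prop where
  | y1 : YPat .pos .zero .pos
  | y2 : YPat .pos .neg .zero
  | y3 : YPat .zero .neg .neg

/-- One application of a growth rule, rewriting `(S, J)` to `(S', J')`. -/
inductive Step : List Bool → List St → List Bool → List St → Prop where
  | hstep (A B : List Bool) (P Q : List St) (s1 s2 : Bool) (j1 j2 j1' j2' : St)
      (hl : A.length = P.length) (hs : s1 ≠ s2) (hp : HPat j1 j2 j1' j2') :
      Step (A ++ s1 :: s2 :: B) (P ++ j1 :: j2 :: Q)
        (A ++ (!s1) :: (!s2) :: B) (P ++ j1' :: j2' :: Q)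
  | ustep (A B : List Bool) (P Q : List St) (s1 s2 : Bool)
      (hl : A.length = P.length) (hs : s1 ≠ s2) :
      Step (A ++ s1 :: s2 :: B) (P ++ St.pos :: St.neg :: Q) (A ++ B) (P ++ Q)
  | ystep (A B : List Bool) (P Q : List St) (s : Bool) (j1 j2 j' : St)
      (hl : A.length = P.length) (hp : YPat j1 j2 j') :
      Step (A ++ s :: s :: B) (P ++ j1 :: j2 :: Q) (A ++ (!s) :: B) (P ++ j' :: Q)

/-- A complete execution of the growth algorithm from `(S, J)` down to the
pair of empty strings. -/
inductive Exec : List Bool → List St → Type where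
  | nil : Exec [] []
  | hstep (A B : List Bool) (P Q : List St) (s1 s2 : Bool) (j1 j2 j1' j2' : St)
      (hl : A.length = P.length) (hs : s1 ≠ s2) (hp : HPat j1 j2 j1' j2')
      (e : Exec (A ++ (!s1) :: (!s2) :: B) (P ++ j1' :: j2' :: Q)) :
      Exec (A ++ s1 :: s2 :: B) (P ++ j1 :: j2 :: Q)
  | ustep (A B : List Bool) (P Q : List St) (s1 s2 : Bool)
      (hl : A.length = P.length) (hs : s1 ≠ s2)
      (e : Exec (A ++ B) (P ++ Q)) :
      Exec (A ++ s1 :: s2 :: B) (P ++ St.pos :: St.neg :: Q)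
  | ystep (A B : List Bool) (P Q : List St) (s : Bool) (j1 j2 j' : St)
      (hl : A.length = P.length) (hp : YPat j1 j2 j')
      (e : Exec (A ++ (!s) :: B) (P ++ j' :: Q)) :
      Exec (A ++ s :: s :: B) (P ++ j1 :: j2 :: Q)

/-- The web tensor of an execution, as coordinates with respect to the basis
`e^S_J` of `V^S`: `web e L` is the coefficient of `e^S_L`. -/
def web : {S : List Bool} → {J : List St} → Exec S J → List St → K
  | _, _, .nil, L => if L = [] then 1 else 0
  | _, _, .hstep A _ _ _ s1 _ _ _ _ _ _ _ _ e, L =>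
      match L.drop A.length with
      | a :: b :: R =>
          ∑ c : St, ∑ d : St,
            (if s1 then HCpm a b c d else HCmp a b c d) *
              web e (L.take A.length ++ c :: d :: R)
      | _ => 0
  | _, _, .ustep A _ _ _ s1 _ _ _ e, L =>
      match L.drop A.length with
      | a :: b :: R => (if s1 then bCpm a b else bCmp a b) * web e (L.take A.length ++ R)
      | _ => 0
  | _, _, .ystep A _ _ _ s _ _ _ _ _ e, L =>
      match L.drop A.length with
      | a :: b :: R =>
          ∑ c : St, (if s then tYpp a b c else tYmm a b c) * web e (L.take A.length ++ c :: R)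
      | _ => 0

/-- `c ∈ v⁻¹ ℤ[v⁻¹]`: a polynomial in `v⁻¹` with zero constant term. -/
def ZeroConst (c : K) : Prop :=
  ∃ p : Polynomial ℤ, p.coeff 0 = 0 ∧ c = Polynomial.aeval v⁻¹ p

/-- `x` has the negative-exponent property relative to a state string `J`
(`n` is the length of the ambient sign string). -/
def NegExpProp (n : ℕ) (x : List St → K) (J : List St) : Prop :=
  x J = 1 ∧ ∀ J' : List St, J'.length = n → J' ≠ J → ZeroConst (x J')

/-- `c ∈ ℕ[v, v⁻¹]`: a Laurent polynomial with nonnegative integer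
coefficients. -/
def IsNatLaurent (c : K) : Prop :=
  ∃ (p : Polynomial ℕ) (m : ℕ), c = v⁻¹ ^ m * Polynomial.aeval v p

/-- `c ∈ ℤ[v⁻¹]`. -/
def InZInv (c : K) : Prop := ∃ p : Polynomial ℤ, c = Polynomial.aeval v⁻¹ p

/-- Property P: all coefficients lie in `ℤ[v⁻¹]` and at most one of them has a
nonzero constant term. -/
def PropP (n : ℕ) (x : List St → K) : Prop :=
  (∀ J : List St, J.length = n → InZInv (x J)) ∧
  ∀ J1 J2 : List St, J1.length = n → J2.length = n →
    ¬ ZeroConst (x J1) → ¬ ZeroConst (x J2) → J1 = J2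

/-- The sign string `(+,+,−,−,+,+,−,−,+,+,−,−)`. -/
def base : List Bool :=
  [true, true, false, false, true, true, false, false, true, true, false, false]


/-- Applying `t^{++}_-` at position `k` (0-indexed), in coordinates. -/
def applyYpp (k : ℕ) (x : List St → K) : List St → K := fun L =>
  match L.drop k with
  | a :: b :: R => ∑ c : St, tYpp a b c * x (L.take k ++ c :: R)
  | _ => 0

/-- Applying `t^{--}_+` at position `k` (0-indexed), in coordinates. -/
def applyYmm (k : ℕ) (x : List St → K) : List St → K := fun L =>
  match L.drop k with
  | a :: b :: R => ∑ c : St, tYmm a b c * x (L.take k ++ c :: R)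
  | _ => 0

section Coefficients

variable {c d : K}

lemma inZInv_iff_mem_adjoin : InZInv c ↔ c ∈ Algebra.adjoin ℤ {v⁻¹} := by
  simp only [InZInv, Algebra.adjoin_singleton_eq_range_aeval, AlgHom.mem_range, eq_comm]

lemma InZInv.mul (hc : InZInv c) (hd : InZInv d) : InZInv (c * d) := by
  rw [inZInv_iff_mem_adjoin] at *
  exact mul_mem hc hd

lemma InZInv.sum {ι : Type*} {s : Finset ι} {f : ι → K} (hf : ∀ i ∈ s, InZInv (f i)) :
    InZInv (∑ i ∈ s, f i) := by
  simp only [inZInv_iff_mem_adjoin] at *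
  exact sum_mem hf

lemma inZInv_one : InZInv 1 := ⟨1, by simp⟩

lemma ZeroConst.inZInv : ZeroConst c → InZInv c := fun ⟨p, _, hp⟩ => ⟨p, hp⟩

lemma zeroConst_zero : ZeroConst 0 := ⟨0, by simp, by simp⟩

lemma zeroConst_v_inv : ZeroConst v⁻¹ := ⟨Polynomial.X, by simp, by simp⟩

lemma ZeroConst.add : ZeroConst c → ZeroConst d → ZeroConst (c + d)
  | ⟨p, hp, hc⟩, ⟨q, hq, hd⟩ => ⟨p + q, by simp [hp, hq], by simp [hc, hd]⟩

lemma ZeroConst.mul_inZInv : ZeroConst c → InZInv d → ZeroConst (c * d)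
  | ⟨p, hp, hc⟩, ⟨q, hd⟩ => ⟨p * q, by simp [Polynomial.mul_coeff_zero, hp], by simp [hc, hd]⟩

lemma InZInv.mul_zeroConst (hc : InZInv c) (hd : ZeroConst d) : ZeroConst (c * d) :=
  mul_comm d c ▸ hd.mul_inZInv hc

lemma ZeroConst.sum {ι : Type*} {s : Finset ι} {f : ι → K} (hf : ∀ i ∈ s, ZeroConst (f i)) :
    ZeroConst (∑ i ∈ s, f i) :=
  Finset.sum_induction f ZeroConst (fun _ _ => ZeroConst.add) zeroConst_zero hf

lemma exists_not_zeroConst_of_sum_mul {ι : Type*} {s : Finset ι} {f g : ι → K}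
    (hf : ∀ i ∈ s, InZInv (f i)) (hg : ∀ i ∈ s, InZInv (g i))
    (hsum : ¬ ZeroConst (∑ i ∈ s, f i * g i)) :
    ∃ i ∈ s, ¬ ZeroConst (f i) ∧ ¬ ZeroConst (g i) := by
  contrapose! hsum
  refine ZeroConst.sum fun i hi => ?_
  by_cases hfi : ZeroConst (f i)
  · exact hfi.mul_inZInv (hg i hi)
  · exact (hf i hi).mul_zeroConst (hsum i hi hfi)

end Coefficients

lemma exists_eq_append_cons_cons {α : Type*} {L : List α} {k : ℕ} (h : k + 1 < L.length) :
    ∃ Q a b R, Q.length = k ∧ L = Q ++ a :: b :: R :=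
  ⟨L.take k, L[k], L[k + 1], L.drop (k + 2), by rw [List.length_take]; omega, by simp⟩

/-- Applying at position `k` (0-indexed) the linear map `e_c ↦ ∑ t a b c • (e_a ⊗ e_b)`, in
coordinates. By definition `applyYpp` and `applyYmm` are the cases `t = tYpp` and `t = tYmm`. -/
def applyTensor (t : St → St → St → K) (k : ℕ) (x : List St → K) : List St → K := fun L =>
  match L.drop k with
  | a :: b :: R => ∑ c : St, t a b c * x (L.take k ++ c :: R)
  | _ => 0

/-- The linear map `e_c ↦ ∑ t a b c • (e_a ⊗ e_b)` takes each basis vector to a vector with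
property P. -/
structure IsPropPTensor (t : St → St → St → K) : Prop where
  inZInv (a b c : St) : InZInv (t a b c)
  unique {a b a' b' c : St} :
    ¬ ZeroConst (t a b c) → ¬ ZeroConst (t a' b' c) → a = a' ∧ b = b'

section ApplyTensor

variable {t : St → St → St → K} {x : List St → K} {Q R : List St} {a b : St}

lemma applyTensor_append_cons_cons :
    applyTensor t Q.length x (Q ++ a :: b :: R) = ∑ c, t a b c * x (Q ++ c :: R) := by
  simp [applyTensor]

lemma IsPropPTensor.inZInv_applyTensor (ht : IsPropPTensor t)
    (hx : ∀ c, InZInv (x (Q ++ c :: R))) :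
    InZInv (applyTensor t Q.length x (Q ++ a :: b :: R)) := by
  rw [applyTensor_append_cons_cons]
  exact InZInv.sum fun c _ => (ht.inZInv a b c).mul (hx c)

lemma IsPropPTensor.exists_not_zeroConst_of_applyTensor (ht : IsPropPTensor t)
    (hx : ∀ c, InZInv (x (Q ++ c :: R)))
    (h : ¬ ZeroConst (applyTensor t Q.length x (Q ++ a :: b :: R))) :
    ∃ c, ¬ ZeroConst (t a b c) ∧ ¬ ZeroConst (x (Q ++ c :: R)) := by
  rw [applyTensor_append_cons_cons] at h
  obtain ⟨c, -, hc⟩ :=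
    exists_not_zeroConst_of_sum_mul (fun c _ => ht.inZInv a b c) (fun c _ => hx c) h
  exact ⟨c, hc⟩

end ApplyTensor

lemma YPat.inj {a b a' b' c : St} (h : YPat a b c) (h' : YPat a' b' c) : a = a' ∧ b = b' := by
  cases h <;> cases h' <;> exact ⟨rfl, rfl⟩

lemma yPat_and_tYpp_eq_one_or_zeroConst (a b c : St) :
    (YPat a b c ∧ tYpp a b c = 1) ∨ ZeroConst (tYpp a b c) := by
  cases a <;> cases b <;> cases c <;>
    first
    | exact .inl ⟨by constructor, rfl⟩
    | exact .inr zeroConst_zero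
    | exact .inr zeroConst_v_inv

lemma isPropPTensor_tYpp : IsPropPTensor tYpp where
  inZInv a b c := by
    obtain ⟨-, h⟩ | h := yPat_and_tYpp_eq_one_or_zeroConst a b c
    · exact h ▸ inZInv_one
    · exact h.inZInv
  unique {a b a' b' c} h h' :=
    have hY := ((yPat_and_tYpp_eq_one_or_zeroConst a b c).resolve_right h).1
    have hY' := ((yPat_and_tYpp_eq_one_or_zeroConst a' b' c).resolve_right h').1
    hY.inj hY'

lemma tYmm_eq_tYpp : tYmm = tYpp := by
  funext a b c
  cases a <;> cases b <;> cases c <;> rfl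

lemma isPropPTensor_tYmm : IsPropPTensor tYmm := tYmm_eq_tYpp ▸ isPropPTensor_tYpp

theorem propP_attachY_general {t : St → St → St → K} (ht : IsPropPTensor t) {n k : ℕ} (hk : k < n)
    {x : List St → K} (hx : PropP n x) : PropP (n + 1) (applyTensor t k x) := by
  obtain ⟨x_inZInv, x_unique⟩ := hx
  have length_contract {Q R : List St} {a b : St} (hL : (Q ++ a :: b :: R).length = n + 1)
      (c : St) : (Q ++ c :: R).length = n := by
    simp only [List.length_append, List.length_cons] at hL ⊢
    omega
  refine ⟨fun L hL => ?_, fun L L' hL hL' hne hne' => ?_⟩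
  · obtain ⟨Q, a, b, R, rfl, rfl⟩ := exists_eq_append_cons_cons (show k + 1 < L.length by omega)
    exact ht.inZInv_applyTensor fun c => x_inZInv _ (length_contract hL c)
  · obtain ⟨Q, a, b, R, rfl, rfl⟩ := exists_eq_append_cons_cons (show k + 1 < L.length by omega)
    obtain ⟨Q', a', b', R', hQ, rfl⟩ :=
      exists_eq_append_cons_cons (show Q.length + 1 < L'.length by omega)
    obtain ⟨c, htc, hxc⟩ :=
      ht.exists_not_zeroConst_of_applyTensor (fun c => x_inZInv _ (length_contract hL c)) hne
    obtain ⟨c', htc', hxc'⟩ :=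
      ht.exists_not_zeroConst_of_applyTensor (fun c => x_inZInv _ (length_contract hL' c))
        (hQ ▸ hne')
    have contracted_eq : Q ++ c :: R = Q' ++ c' :: R' :=
      x_unique _ _ (length_contract hL c) (length_contract hL' c') hxc hxc'
    obtain ⟨rfl, hcR⟩ := List.append_inj contracted_eq hQ.symm
    obtain ⟨rfl, rfl⟩ := List.cons.inj hcR
    obtain ⟨rfl, rfl⟩ := ht.unique htc htc'
    rfl

/-- property P is preserved by attaching a `Y` at a position
whose sign is `−` (via `t^{++}_-`) or `+` (via `t^{--}_+`). -/
theorem propP_attachY (S' : List Bool) (k : ℕ) (hk : k < S'.length)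
    (x : List St → K) (hx : PropP S'.length x) :
    (S'.get ⟨k, hk⟩ = false → PropP (S'.length + 1) (applyYpp k x)) ∧
    (S'.get ⟨k, hk⟩ = true → PropP (S'.length + 1) (applyYmm k x)) :=
  ⟨fun _ => propP_attachY_general isPropPTensor_tYpp hk hx,
    fun _ => propP_attachY_general isPropPTensor_tYmm hk hx⟩

end
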